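/- Let N(X) denote the number of fundamental discriminants D with |D| ≤ X, and for real Y set μ = ∑_{p ≤ Y} 1/(p+1) (sum over primes). For all ε > 0 and δ > 0 there exists a constant C > 0 such that for all X ≥ 3 and all real Y with 3 ≤ Y ≤ X^{1/2 − δ}: | (1/N(X)) · ∑_{D fundamental, |D| ≤ X} (ω_Y(D) − μ)² − ∑_{p ≤ Y} (1/(p+1))·(1 − 1/(p+1)) | ≤ C · Y · X^{−1/2 + ε}. -/

import Mathlib

open Filter Topology NumberField

noncomputable section

/-- A fundamental discriminant: an integer `D ≠ 1` that is either squarefree and `≡ 1 (mod 4)`,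
or `4m` with `m` squarefree and `m ≡ 2, 3 (mod 4)`. -/
def IsFundDiscr (D : ℤ) : Prop :=
  D ≠ 1 ∧ ((Squarefree D ∧ D % 4 = 1) ∨
    ∃ m : ℤ, D = 4 * m ∧ Squarefree m ∧ (m % 4 = 2 ∨ m % 4 = 3))

/-- The number of fundamental discriminants `D` with `|D| ≤ X` satisfying `P`. -/
def fdCount (P : ℤ → Prop) (X : ℝ) : ℕ :=
  Nat.card {D : ℤ // IsFundDiscr D ∧ |(D : ℝ)| ≤ X ∧ P D}

/-- The property `P` holds for 100% of fundamental discriminants. -/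
def FdDensityOne (P : ℤ → Prop) : Prop :=
  Tendsto (fun X : ℝ => (fdCount P X : ℝ) / (fdCount (fun _ => True) X : ℝ)) atTop (𝓝 1)

/-- `ω_Y(D)`: the number of primes `p ≤ Y` dividing `D`. -/
def omegaY (Y : ℝ) (D : ℤ) : ℕ :=
  Nat.card {p : ℕ // p.Prime ∧ (p : ℝ) ≤ Y ∧ (p : ℤ) ∣ D}

/-- `∑_{p ≤ Y} f p`, the sum over primes `p ≤ Y`. -/
def primeSum (Y : ℝ) (f : ℕ → ℝ) : ℝ :=
  ∑ᶠ p ∈ {p : ℕ | p.Prime ∧ (p : ℝ) ≤ Y}, f p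

theorem aux_sq_dvd (a b m : ℕ) (hb : b ≠ 0) (hm : Squarefree m) (h : a ^ 2 ∣ b ^ 2 * m) : a ∣ b := by
  have hm0 : m ≠ 0 := hm.ne_zero
  have ha : a ≠ 0 := by
    rintro rfl
    simp at h
    tauto
  rw [← Nat.factorization_le_iff_dvd ha hb]
  have h2 := (Nat.factorization_le_iff_dvd (pow_ne_zero 2 ha)
    (mul_ne_zero (pow_ne_zero 2 hb) hm0)).2 h
  intro p
  have h3 := h2 p
  have h4 := hm.natFactorization_le_one p
  rw [Nat.factorization_mul (pow_ne_zero 2 hb) hm0] at h3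
  simp at h3
  omega

theorem aux_ind (n A : ℕ) (hn : n ≠ 0) (hA : n < (A + 1) ^ 2) :
    ∑ a ∈ (Finset.Icc 1 A).filter (fun a => a ^ 2 ∣ n), ArithmeticFunction.moebius a
      = if Squarefree n then 1 else 0 := by
  obtain ⟨m, b, h, hm⟩ := Nat.sq_mul_squarefree n
  have hb : b ≠ 0 := by rintro rfl; simp at h; omega
  have e : (Finset.Icc 1 A).filter (fun a => a ^ 2 ∣ n) = b.divisors := by
    ext a
    simp only [Finset.mem_filter, Finset.mem_Icc, Nat.mem_divisors]
    constructor
    · rintro ⟨_, h1⟩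
      exact ⟨aux_sq_dvd a b m hb hm (h ▸ h1), hb⟩
    · rintro ⟨h1, _⟩
      have h2 : a ^ 2 ∣ n := h ▸ Dvd.dvd.mul_right (pow_dvd_pow_of_dvd h1 2) m
      have h3 := Nat.le_of_dvd (Nat.pos_of_ne_zero hn) h2
      have h4 : a < A + 1 := lt_of_pow_lt_pow_left₀ 2 (by omega) (by omega)
      exact ⟨⟨Nat.pos_of_dvd_of_pos h1 (Nat.pos_of_ne_zero hb), by omega⟩, h2⟩
  rw [e]
  have h6 : ∑ a ∈ b.divisors, ArithmeticFunction.moebius a = if b = 1 then 1 else 0 := by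
    rw [← ArithmeticFunction.coe_mul_zeta_apply, ArithmeticFunction.moebius_mul_coe_zeta,
      ArithmeticFunction.one_apply]
  rw [h6]
  have h7 : Squarefree n ↔ b = 1 := by
    constructor
    · intro hs
      have := hs b ⟨m, by rw [← h]; ring⟩
      simpa using this
    · rintro rfl
      rw [← h]; simpa using hm
  simp [h7]

/-- number of squarefree `n ≤ x` coprime to `d` -/
def sfC (d : ℕ) (x : ℝ) : ℕ :=
  ((Finset.Icc 1 ⌊x⌋₊).filter (fun n => Squarefree n ∧ n.Coprime d)).card

theorem aux_count (N A : ℕ) (hA : N < (A + 1) ^ 2) :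
    (((Finset.Icc 1 N).filter (fun n => Squarefree n)).card : ℤ) =
      ∑ a ∈ Finset.Icc 1 A, ArithmeticFunction.moebius a * ((N / a ^ 2 : ℕ) : ℤ) := by
  rw [Finset.card_filter]
  push_cast
  have : ∀ n ∈ Finset.Icc 1 N, (if Squarefree n then (1 : ℤ) else 0) =
      ∑ a ∈ Finset.Icc 1 A, if a ^ 2 ∣ n then ArithmeticFunction.moebius a else 0 := by
    intro n hn
    rw [Finset.mem_Icc] at hn
    rw [← aux_ind n A (by omega) (by omega), Finset.sum_filter]
  rw [Finset.sum_congr rfl this, Finset.sum_comm]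
  refine Finset.sum_congr rfl fun a ha => ?_
  rw [← Finset.sum_filter, Finset.sum_const]
  have h1 : (Finset.Icc 1 N) = Finset.Ioc 0 N := by ext; simp; omega
  rw [h1, Nat.Ioc_filter_dvd_card_eq_div]
  simp [mul_comm]

def mterm (a : ℕ) : ℝ := (ArithmeticFunction.moebius a : ℝ) * ((a : ℝ) ^ 2)⁻¹

theorem abs_mu_le (a : ℕ) : |(ArithmeticFunction.moebius a : ℝ)| ≤ 1 := by
  have := @ArithmeticFunction.abs_moebius_le_one a
  exact_mod_cast this

theorem abs_mterm (a : ℕ) : |mterm a| ≤ ((a : ℝ) ^ 2)⁻¹ := by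
  rw [mterm, abs_mul, abs_of_nonneg (a := ((a : ℝ) ^ 2)⁻¹) (by positivity)]
  exact mul_le_of_le_one_left (by positivity) (abs_mu_le a)

theorem summable_mterm : Summable mterm := by
  refine Summable.of_norm_bounded (g := fun a : ℕ => ((a : ℝ) ^ 2)⁻¹) ?_ abs_mterm
  exact Real.summable_nat_pow_inv.2 (by norm_num)

def cc : ℝ := ∑' a, mterm a

theorem tail_le (A : ℕ) : |cc - ∑ a ∈ Finset.Icc 1 A, mterm a| ≤ 2 / (A + 1) := by
  have h := summable_mterm.hasSum.tendsto_sum_nat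
  have h2 := (h.sub_const (∑ a ∈ Finset.Icc 1 A, mterm a)).abs
  refine le_of_tendsto h2 ?_
  filter_upwards [eventually_ge_atTop (A + 1)] with M hM
  have h0 : mterm 0 = 0 := by simp [mterm]
  have e1 : ∑ a ∈ Finset.Icc 1 A, mterm a = ∑ a ∈ Finset.range (A + 1), mterm a := by
    rw [Finset.sum_range_succ', h0, add_zero, Finset.range_eq_Ico,
      Finset.sum_Ico_add' (fun a => mterm a) 0 A 1]
    rfl
  rw [e1, Finset.sum_range_sub_sum_range hM]
  have e2 : (Finset.range M).filter (fun k => A + 1 ≤ k) = Finset.Ioo A M := by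
    ext; simp; omega
  rw [e2]
  refine (Finset.abs_sum_le_sum_abs _ _).trans ?_
  refine (Finset.sum_le_sum fun a _ => abs_mterm a).trans ?_
  exact sum_Ioo_inv_sq_le A M

theorem cc_pos : 0 < cc := by
  have h := tail_le 2
  have e : ∑ a ∈ Finset.Icc 1 2, mterm a = 3 / 4 := by
    rw [show Finset.Icc 1 2 = ({1, 2} : Finset ℕ) from rfl]
    simp [mterm, ArithmeticFunction.moebius_apply_prime Nat.prime_two]
    norm_num
  rw [e, abs_le] at h
  norm_num at h
  linarith [h.1]

theorem base_nat (N : ℕ) :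
    |(((Finset.Icc 1 N).filter (fun n => Squarefree n)).card : ℝ) - cc * N| ≤ 3 * √N := by
  set A := Nat.sqrt N with hAdef
  have hA : N < (A + 1) ^ 2 := by
    have := Nat.lt_succ_sqrt N
    rw [pow_two]; exact this
  have hA2 : (A : ℝ) ≤ √N := Real.nat_sqrt_le_real_sqrt
  have hA3 : √(N : ℝ) ≤ A + 1 := by
    apply Real.sqrt_le_iff.2
    refine ⟨by positivity, ?_⟩
    exact_mod_cast hA.le
  have h1 := aux_count N A hA
  have h1' : (((Finset.Icc 1 N).filter (fun n => Squarefree n)).card : ℝ) =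
      ∑ a ∈ Finset.Icc 1 A, (ArithmeticFunction.moebius a : ℝ) * ((N / a ^ 2 : ℕ) : ℝ) := by
    have h := congrArg (Int.cast : ℤ → ℝ) h1
    simpa only [Int.cast_natCast, Int.cast_sum, Int.cast_mul] using h
  have h2 : |(((Finset.Icc 1 N).filter (fun n => Squarefree n)).card : ℝ)
      - (∑ a ∈ Finset.Icc 1 A, mterm a) * N| ≤ A := by
    rw [h1', Finset.sum_mul, ← Finset.sum_sub_distrib]
    refine (Finset.abs_sum_le_sum_abs _ _).trans ?_
    refine (Finset.sum_le_card_nsmul _ _ 1 ?_).trans (by simp)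
    intro a ha
    rw [mterm, mul_assoc, ← mul_sub, abs_mul]
    refine mul_le_one₀ (abs_mu_le a) (abs_nonneg _) ?_
    have e : ((N / a ^ 2 : ℕ) : ℝ) = ⌊((N : ℝ) / ((a ^ 2 : ℕ) : ℝ))⌋₊ := by
      rw [Nat.floor_div_natCast, Nat.floor_natCast]
    have h3 := Nat.floor_le (a := (N : ℝ) / ((a ^ 2 : ℕ) : ℝ)) (by positivity)
    have h4 := Nat.lt_floor_add_one ((N : ℝ) / ((a ^ 2 : ℕ) : ℝ))
    rw [e]
    rw [show ((a : ℝ) ^ 2)⁻¹ * N = (N : ℝ) / ((a ^ 2 : ℕ) : ℝ) by push_cast; field_simp]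
    rw [abs_le]; constructor <;> linarith
  have h3 := tail_le A
  have h4 : |(cc - ∑ a ∈ Finset.Icc 1 A, mterm a) * N| ≤ 2 * √N := by
    rw [abs_mul, abs_of_nonneg (a := (N : ℝ)) (by positivity)]
    refine (mul_le_mul_of_nonneg_right h3 (by positivity)).trans ?_
    have h5 : (N : ℝ) = √N * √N := (Real.mul_self_sqrt (by positivity)).symm
    rw [div_mul_eq_mul_div, div_le_iff₀ (by positivity)]
    nlinarith [Real.sqrt_nonneg (N : ℝ)]
  rw [abs_le] at *
  constructor <;> nlinarith

theorem base_real (x : ℝ) (hx : 0 ≤ x) : |(sfC 1 x : ℝ) - cc * x| ≤ (3 + cc) * √x := by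
  have hc := cc_pos
  have e : sfC 1 x = ((Finset.Icc 1 ⌊x⌋₊).filter (fun n => Squarefree n)).card := by
    simp [sfC]
  have h1 := base_nat ⌊x⌋₊
  rw [← e] at h1
  have h2 := Nat.floor_le hx
  have h3 := Nat.lt_floor_add_one x
  have h4 : √(⌊x⌋₊ : ℝ) ≤ √x := Real.sqrt_le_sqrt h2
  have h5 : x - ⌊x⌋₊ ≤ √x := by
    rcases lt_or_ge x 1 with h | h
    · have : x ≤ √x := by
        apply Real.le_sqrt_of_sq_le; nlinarith
      have : (0 : ℝ) ≤ ⌊x⌋₊ := by positivity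
      linarith
    · have : 1 ≤ √x := Real.one_le_sqrt.2 h
      linarith
  rw [abs_le] at *
  constructor <;> nlinarith

/-- squarefree multiples of `d` coprime to `e` -/
theorem sf_mult (e d : ℕ) (x : ℝ) (hd : Squarefree d) (hed : d.Coprime e) :
    ((Finset.Icc 1 ⌊x⌋₊).filter (fun n => (Squarefree n ∧ n.Coprime e) ∧ d ∣ n)).card
      = sfC (e * d) (x / d) := by
  have hd0 : 0 < d := Nat.pos_of_ne_zero hd.ne_zero
  rw [sfC, Nat.floor_div_natCast]
  refine Finset.card_nbij' (fun n => n / d) (fun m => d * m) ?_ ?_ ?_ ?_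
  · intro n hn
    simp only [Finset.coe_filter, Finset.mem_Icc, Set.mem_ofPred_eq] at hn ⊢
    obtain ⟨⟨h1, h2⟩, ⟨h3, h4⟩, k, rfl⟩ := hn
    rw [Nat.mul_div_cancel_left _ hd0]
    rw [Nat.squarefree_mul_iff] at h3
    refine ⟨⟨Nat.pos_of_ne_zero (by rintro rfl; simp at h1), ?_⟩, h3.2.2, ?_⟩
    · rw [Nat.le_div_iff_mul_le hd0, mul_comm]; exact h2
    · exact Nat.Coprime.mul_right (Nat.Coprime.coprime_mul_left h4) h3.1.symm
  · intro m hm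
    simp only [Finset.coe_filter, Finset.mem_Icc, Set.mem_ofPred_eq] at hm ⊢
    obtain ⟨⟨h1, h2⟩, h3, h4⟩ := hm
    rw [Nat.le_div_iff_mul_le hd0, mul_comm] at h2
    have h5 : m.Coprime e := Nat.Coprime.coprime_mul_right_right h4
    have h6 : m.Coprime d := Nat.Coprime.coprime_mul_left_right h4
    refine ⟨⟨Nat.mul_pos hd0 h1, h2⟩, ⟨?_, ?_⟩, dvd_mul_right _ _⟩
    · rw [Nat.squarefree_mul_iff]; exact ⟨h6.symm, hd, h3⟩
    · exact Nat.Coprime.mul_left hed h5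
  · intro n hn
    simp only [Finset.coe_filter, Finset.mem_Icc, Set.mem_ofPred_eq] at hn
    exact Nat.mul_div_cancel' hn.2.2
  · intro m hm
    exact Nat.mul_div_cancel_left _ hd0

theorem sfC_rec (d p : ℕ) (x : ℝ) (hp : p.Prime) (hpd : p.Coprime d) :
    sfC d x = sfC (d * p) x + sfC (d * p) (x / p) := by
  rw [← sf_mult d p x hp.prime.squarefree hpd]
  conv_lhs => rw [sfC, ← Finset.card_filter_add_card_filter_not (fun n => ¬ p ∣ n)]
  rw [Finset.filter_filter, Finset.filter_filter, sfC]
  congr 1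
  · congr 1
    ext n
    simp only [Finset.mem_filter, and_congr_right_iff]
    intro _
    rw [Nat.coprime_mul_iff_right, and_assoc, ← hp.coprime_iff_not_dvd, Nat.coprime_comm (m := p)]
  · congr 1
    ext n
    simp

theorem step (d p : ℕ) (hp : p.Prime) (hpd : p.Coprime d) (c K : ℝ) (hc : 0 ≤ c) (hcK : c ≤ K)
    (h : ∀ x : ℝ, 0 ≤ x → |(sfC d x : ℝ) - c * x| ≤ K * √x) :
    ∀ x : ℝ, 0 ≤ x → |(sfC (d * p) x : ℝ) - c * (p / (p + 1)) * x| ≤ 4 * K * √x := by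
  have hp2 : (2 : ℝ) ≤ p := by exact_mod_cast hp.two_le
  have key : ∀ n : ℕ, ∀ x : ℝ, 0 ≤ x → ⌊x⌋₊ = n →
      |(sfC (d * p) x : ℝ) - c * (p / (p + 1)) * x| ≤ 4 * K * √x := by
    intro n
    induction n using Nat.strong_induction_on with
    | _ n ih =>
    intro x hx hn
    have hs := Real.sqrt_nonneg x
    rcases lt_or_ge x 1 with hx1 | hx1
    · have e : sfC (d * p) x = 0 := by
        rw [sfC, Nat.floor_eq_zero.2 hx1]; simp
      have h1 : x ≤ √x := by
        apply Real.le_sqrt_of_sq_le; nlinarith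
      have h2 : (p : ℝ) / (p + 1) ≤ 1 := by
        rw [div_le_one (by positivity)]; linarith
      have h3 : (0 : ℝ) ≤ p / (p + 1) := by positivity
      rw [e, Nat.cast_zero, zero_sub, abs_neg, abs_of_nonneg (by positivity)]
      calc c * (p / (p + 1)) * x ≤ c * 1 * √x := by gcongr
        _ ≤ 4 * K * √x := by nlinarith
    · have hlt : ⌊x / p⌋₊ < n := by
        rw [Nat.floor_div_natCast, ← hn]
        exact Nat.div_lt_self (Nat.floor_pos.2 hx1) hp.one_lt
      have h1 := ih _ hlt (x / p) (by positivity) rfl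
      have h2 := h x hx
      have h3 := sfC_rec d p x hp hpd
      have h4 : √(x / p) ≤ 3 / 4 * √x := by
        rw [Real.sqrt_le_left (by positivity), mul_pow, Real.sq_sqrt hx, div_le_iff₀ (by positivity)]
        nlinarith
      have h5 : c * x = c * (p / (p + 1)) * x + c * (p / (p + 1)) * (x / p) := by
        field_simp
      rw [h3, h5] at h2
      push_cast at h2
      have hK : 0 ≤ K := hc.trans hcK
      have h6 : 4 * K * √(x / p) ≤ 4 * K * (3 / 4 * √x) := by gcongr
      rw [abs_le] at *
      constructor <;> nlinarith
  intro x hx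
  exact key _ x hx rfl

def KK : ℝ := 3 + cc

theorem asym2 : ∀ x : ℝ, 0 ≤ x → |(sfC (2 * 1) x : ℝ) - 2 / 3 * cc * x| ≤ 4 * KK * √x := by
  have h := step 1 2 Nat.prime_two (by norm_num) cc KK cc_pos.le (by rw [KK]; linarith) base_real
  intro x hx
  have := h x hx
  convert this using 4
  push_cast; ring

def qC (e N : ℕ) : ℕ :=
  ((Finset.Icc 1 N).filter (fun n => (Squarefree n ∧ n.Coprime 2) ∧ e ∣ n)).card

theorem qC_eq (e : ℕ) (x : ℝ) (he : Squarefree e) (he2 : e.Coprime 2) :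
    qC e ⌊x⌋₊ = sfC (2 * e) (x / e) := sf_mult 2 e x he he2

open Classical in
theorem cnt_r (e N : ℕ) (r : ℤ) (hr : r = 1 ∨ r = 3) :
    ((Finset.Icc (-(N : ℤ)) N).filter
      (fun m => (Squarefree m ∧ m % 4 = r) ∧ (e : ℤ) ∣ m)).card = qC e N := by
  rw [qC]
  refine Finset.card_nbij' Int.natAbs (fun n => if (n : ℤ) % 4 = r then (n : ℤ) else -(n : ℤ))
    ?_ ?_ ?_ ?_
  · intro m hm
    simp only [Finset.coe_filter, Finset.mem_Icc, Set.mem_ofPred_eq] at hm ⊢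
    obtain ⟨⟨h1, h2⟩, ⟨h3, h4⟩, h5⟩ := hm
    refine ⟨by omega, ⟨Int.squarefree_natAbs.2 h3, ?_⟩, Int.natCast_dvd.1 h5⟩
    rw [Nat.coprime_two_right, Int.natAbs_odd, Int.odd_iff]
    omega
  · intro n hn
    simp only [Finset.coe_filter, Finset.mem_Icc, Set.mem_ofPred_eq] at hn ⊢
    obtain ⟨⟨h1, h2⟩, ⟨h3, h4⟩, h5⟩ := hn
    rw [Nat.coprime_two_right, Nat.odd_iff] at h4
    have h6 : Squarefree (n : ℤ) := Int.squarefree_natCast.2 h3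
    have h7 : (e : ℤ) ∣ n := Int.natCast_dvd_natCast.2 h5
    split_ifs with h
    · exact ⟨by omega, ⟨h6, h⟩, h7⟩
    · exact ⟨by omega, ⟨Int.squarefree_natAbs.1 (by rw [Int.natAbs_neg, Int.natAbs_natCast]; exact h3),
        by omega⟩, (dvd_neg).2 h7⟩
  · intro m hm
    simp only [Finset.coe_filter, Finset.mem_Icc, Set.mem_ofPred_eq] at hm ⊢
    split_ifs <;> omega
  · intro n hn
    simp only
    split_ifs <;> simp

open Classical in
theorem cnt_odd (e N : ℕ) :
    ((Finset.Icc (-(N : ℤ)) N).filter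
      (fun m => (Squarefree m ∧ m % 2 = 1) ∧ (e : ℤ) ∣ m)).card = 2 * qC e N := by
  rw [two_mul]
  nth_rw 1 [← cnt_r e N 1 (Or.inl rfl)]
  rw [← cnt_r e N 3 (Or.inr rfl), ← Finset.card_union_of_disjoint]
  · congr 1
    ext m
    simp only [Finset.mem_union, Finset.mem_filter]
    have : m % 2 = 1 ↔ m % 4 = 1 ∨ m % 4 = 3 := by omega
    rw [this]; tauto
  · rw [Finset.disjoint_filter]
    intro m _ h1 h2
    have := h1.1.2
    have := h2.1.2
    omega

theorem cnt_mul (k N : ℕ) (hk : 0 < k) (P : ℤ → Prop) [DecidablePred P] (R : ℤ → Prop)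
    [DecidablePred R] (h : ∀ m : ℤ, R (k * m) ↔ P m) (h' : ∀ D, R D → (k : ℤ) ∣ D) :
    ((Finset.Icc (-(N : ℤ)) N).filter R).card =
    ((Finset.Icc (-((N / k : ℕ) : ℤ)) ((N / k : ℕ) : ℤ)).filter P).card := by
  have hk' : (0 : ℤ) < k := by exact_mod_cast hk
  have hb : ∀ m : ℤ, (-(N : ℤ) ≤ k * m ∧ k * m ≤ N) ↔
      (-((N / k : ℕ) : ℤ) ≤ m ∧ m ≤ ((N / k : ℕ) : ℤ)) := by
    intro m
    rw [← abs_le, ← abs_le, abs_mul, abs_of_pos hk']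
    push_cast
    rw [Int.le_ediv_iff_mul_le hk', mul_comm]
  refine Finset.card_nbij' (fun D => D / k) (fun m => k * m) ?_ ?_ ?_ ?_
  · intro D hD
    simp only [Finset.coe_filter, Finset.mem_Icc, Set.mem_ofPred_eq] at hD ⊢
    obtain ⟨m, rfl⟩ := h' D hD.2
    rw [Int.mul_ediv_cancel_left _ hk'.ne']
    exact ⟨(hb m).1 hD.1, (h m).1 hD.2⟩
  · intro m hm
    simp only [Finset.coe_filter, Finset.mem_Icc, Set.mem_ofPred_eq] at hm ⊢
    exact ⟨(hb m).2 hm.1, (h m).2 hm.2⟩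
  · intro D hD
    simp only [Finset.coe_filter, Finset.mem_Icc, Set.mem_ofPred_eq] at hD ⊢
    exact Int.mul_ediv_cancel' (h' D hD.2)
  · intro m hm
    exact Int.mul_ediv_cancel_left _ hk'.ne'

open Classical in
/-- fundamental discriminants up to `N` in absolute value -/
def fdF (N : ℕ) : Finset ℤ := (Finset.Icc (-(N : ℤ)) N).filter IsFundDiscr

def aC (d N : ℕ) : ℕ := ((fdF N).filter (fun D => (d : ℤ) ∣ D)).card

theorem dvd2 (e : ℕ) (m : ℤ) (he : e.Coprime 2) : (e : ℤ) ∣ (2 : ℕ) * m ↔ (e : ℤ) ∣ m := by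
  have : IsCoprime (e : ℤ) ((2 : ℕ) : ℤ) := Nat.isCoprime_iff_coprime.2 he
  exact ⟨this.dvd_of_dvd_mul_left, fun h => h.mul_left _⟩

open Classical in
theorem cnt_even (d e N : ℕ) (hde : ∀ m : ℤ, (d : ℤ) ∣ 4 * m ↔ (e : ℤ) ∣ m) (he : e.Coprime 2) :
    ((Finset.Icc (-(N : ℤ)) N).filter (fun D => (∃ m : ℤ, D = 4 * m ∧ Squarefree m ∧
      (m % 4 = 2 ∨ m % 4 = 3)) ∧ (d : ℤ) ∣ D)).card = qC e (N / 4) + 2 * qC e (N / 8) := by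
  rw [cnt_mul 4 N (by norm_num)
    (fun m => (Squarefree m ∧ (m % 4 = 2 ∨ m % 4 = 3)) ∧ (e : ℤ) ∣ m)]
  · rw [show N / 8 = N / 4 / 2 by omega]
    set M := N / 4
    rw [← cnt_r e M 3 (Or.inr rfl), ← cnt_odd e (M / 2)]
    rw [← cnt_mul 2 M (by norm_num) (fun m => (Squarefree m ∧ m % 2 = 1) ∧ (e : ℤ) ∣ m)
      (fun m => (Squarefree m ∧ m % 4 = 2) ∧ (e : ℤ) ∣ m), ← Finset.card_union_of_disjoint]
    · congr 1
      ext m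
      simp only [Finset.mem_union, Finset.mem_filter]
      tauto
    · rw [Finset.disjoint_filter]
      intro m _ h1 h2
      have := h1.1.2
      have := h2.1.2
      omega
    · intro m
      have c1 : (e : ℤ) ∣ (2 : ℕ) * m ↔ (e : ℤ) ∣ m := by
        exact dvd2 e m he
      have c2 : Squarefree (((2 : ℕ) : ℤ) * m) ∧ (((2 : ℕ) : ℤ) * m) % 4 = 2 ↔
          Squarefree m ∧ m % 2 = 1 := by
        have : (((2 : ℕ) : ℤ) * m) % 4 = 2 ↔ m % 2 = 1 := by push_cast; omega
        rw [this, and_congr_left_iff]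
        intro hm
        rw [← Int.squarefree_natAbs, Int.natAbs_mul, Nat.squarefree_mul_iff,
          Int.squarefree_natAbs (n := m)]
        have h1 : (Int.natAbs ((2 : ℕ) : ℤ)).Coprime m.natAbs := by
          simp only [Int.natAbs_natCast]
          rw [Nat.coprime_two_left, Int.natAbs_odd, Int.odd_iff]
          exact hm
        have h2 : Squarefree (Int.natAbs ((2 : ℕ) : ℤ)) := by
          simp only [Int.natAbs_natCast]
          exact Nat.prime_two.prime.squarefree
        tauto
      rw [c1, c2]
    · intro D hD
      have := hD.1.2
      push_cast
      omega
  · intro m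
    push_cast
    rw [hde m]
    constructor
    · rintro ⟨⟨k, hk, h⟩, h2⟩
      obtain rfl : m = k := by omega
      exact ⟨h, h2⟩
    · rintro ⟨h, h2⟩
      exact ⟨⟨m, rfl, h⟩, h2⟩
  · rintro D ⟨⟨m, rfl, _⟩, _⟩
    exact dvd_mul_right _ _

theorem aC_even (e N : ℕ) (he : e.Coprime 2) :
    aC (2 * e) N = qC e (N / 4) + 2 * qC e (N / 8) := by
  classical
  rw [← cnt_even (2 * e) e N ?_ he, aC, fdF, Finset.filter_filter]
  · congr 1
    ext D
    simp only [Finset.mem_filter, and_congr_right_iff]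
    simp only [IsFundDiscr]
    intro _
    constructor
    · rintro ⟨⟨h1, h2 | h2⟩, h3⟩
      · have : (2 : ℤ) ∣ D := dvd_trans ⟨e, by push_cast; ring⟩ h3
        omega
      · exact ⟨h2, h3⟩
    · rintro ⟨h2, h3⟩
      refine ⟨⟨?_, Or.inr h2⟩, h3⟩
      obtain ⟨m, rfl, _⟩ := h2
      omega
  · intro m
    rw [show ((2 * e : ℕ) : ℤ) = 2 * e by push_cast; ring, show 4 * m = 2 * (2 * m) by ring,
      mul_dvd_mul_iff_left (by norm_num)]
    exact dvd2 e m he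

theorem aC_odd (e N : ℕ) (he : e.Coprime 2) (hN : 1 ≤ N) :
    aC e N + (if e = 1 then 1 else 0) = qC e N + (qC e (N / 4) + 2 * qC e (N / 8)) := by
  classical
  rw [← cnt_even e e N ?_ he, ← cnt_r e N 1 (Or.inl rfl), ← Finset.card_union_of_disjoint]
  · have h1 : (if e = 1 then 1 else 0) = (({1} : Finset ℤ).filter (fun D => (e : ℤ) ∣ D)).card := by
      rw [Finset.filter_singleton]
      have : (e : ℤ) ∣ 1 ↔ e = 1 := by
        rw [show (1 : ℤ) = ((1 : ℕ) : ℤ) by norm_num, Int.natCast_dvd_natCast, Nat.dvd_one]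
      split_ifs <;> simp_all
    rw [h1, aC, ← Finset.card_union_of_disjoint]
    · congr 1
      ext D
      simp only [Finset.mem_union, Finset.mem_filter, fdF, Finset.mem_singleton,
        Finset.mem_Icc]
      simp only [IsFundDiscr]
      by_cases hD : D = 1
      · subst hD
        have h2 : -(N : ℤ) ≤ 1 ∧ (1 : ℤ) ≤ N := by omega
        have h3 : ¬ ∃ m : ℤ, 1 = 4 * m ∧ Squarefree m ∧ (m % 4 = 2 ∨ m % 4 = 3) := by
          rintro ⟨m, hm, _⟩
          omega
        have h4 : Squarefree (1 : ℤ) := squarefree_one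
        simp [h2, h3]
      · generalize (∃ m : ℤ, D = 4 * m ∧ Squarefree m ∧ (m % 4 = 2 ∨ m % 4 = 3)) = E
        simp only [hD, ne_eq, not_false_eq_true, true_and, false_and, or_false]
        tauto
    · rw [Finset.disjoint_left]
      intro D h1 h2
      simp only [Finset.mem_filter, fdF, Finset.mem_singleton] at h1 h2
      simp only [IsFundDiscr] at h1
      tauto
  · rw [Finset.disjoint_filter]
    rintro D _ h1 ⟨⟨m, rfl, _⟩, _⟩
    have := h1.1.2
    omega
  · intro m
    rw [show 4 * m = (2 : ℕ) * ((2 : ℕ) * m) by push_cast; ring]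
    rw [dvd2 e _ he, dvd2 e _ he]

theorem disc_even (e : ℕ) (he : Squarefree e) (he2 : e.Coprime 2) (c K : ℝ) (hK : 0 ≤ K)
    (h : ∀ x : ℝ, 0 ≤ x → |(sfC (2 * e) x : ℝ) - c * x| ≤ K * √x) (x : ℝ) (hx : 0 ≤ x) :
    |(aC (2 * e) ⌊x⌋₊ : ℝ) - c / (2 * e) * x| ≤ 3 * K * √(x / e) := by
  have he0 : (0 : ℝ) < e := by exact_mod_cast Nat.pos_of_ne_zero he.ne_zero
  rw [aC_even e _ he2, ← Nat.floor_div_ofNat, ← Nat.floor_div_ofNat, qC_eq e _ he he2,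
    qC_eq e _ he he2]
  have h1 := h (x / OfNat.ofNat 4 / e) (by positivity)
  have h2 := h (x / OfNat.ofNat 8 / e) (by positivity)
  have s1 : √(x / OfNat.ofNat 4 / e) ≤ √(x / e) := by
    apply Real.sqrt_le_sqrt
    gcongr
    apply div_le_self hx
    norm_num
  have s2 : √(x / OfNat.ofNat 8 / e) ≤ √(x / e) := by
    apply Real.sqrt_le_sqrt
    gcongr
    apply div_le_self hx
    norm_num
  have t1 := mul_le_mul_of_nonneg_left s1 hK
  have t2 := mul_le_mul_of_nonneg_left s2 hK
  have e1 : c / (2 * e) * x = c * (x / OfNat.ofNat 4 / e) + 2 * (c * (x / OfNat.ofNat 8 / e)) := by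
    field_simp
    norm_num
    ring
  rw [e1]
  push_cast
  rw [abs_le] at *
  constructor <;> linarith

theorem disc_odd (e : ℕ) (he : Squarefree e) (he2 : e.Coprime 2) (c K : ℝ) (hK : 0 ≤ K)
    (h : ∀ x : ℝ, 0 ≤ x → |(sfC (2 * e) x : ℝ) - c * x| ≤ K * √x) (x : ℝ) (hx : 1 ≤ x) :
    |(aC e ⌊x⌋₊ : ℝ) - 3 / 2 * c / e * x| ≤ (4 * K + 1) * √(x / e) := by
  have he0 : (0 : ℝ) < e := by exact_mod_cast Nat.pos_of_ne_zero he.ne_zero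
  have h1 := disc_even e he he2 c K hK h x (by linarith)
  have h2 := h (x / e) (by positivity)
  have h3 := aC_odd e ⌊x⌋₊ he2 (Nat.floor_pos.2 hx)
  rw [← aC_even e _ he2, qC_eq e _ he he2] at h3
  have h4 : (0 : ℝ) ≤ (((if e = 1 then 1 else 0 : ℕ)) : ℝ) := by positivity
  have h5 : (((if e = 1 then 1 else 0 : ℕ)) : ℝ) ≤ √(x / e) := by
    split_ifs with h6
    · subst h6
      simpa using hx
    · rw [Nat.cast_zero]
      exact Real.sqrt_nonneg _
  have h6 : (aC e ⌊x⌋₊ : ℝ) + (((if e = 1 then 1 else 0 : ℕ)) : ℝ) =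
    sfC (2 * e) (x / e) + aC (2 * e) ⌊x⌋₊ := by exact_mod_cast h3
  have e1 : 3 / 2 * c / e * x = c * (x / e) + c / (2 * e) * x := by
    field_simp
    norm_num
    ring
  rw [e1]
  rw [abs_le] at *
  constructor <;> linarith

theorem KK_pos : 0 < KK := by
  have := cc_pos
  rw [KK]; linarith

theorem cc_le_KK : cc ≤ KK := by
  rw [KK]; linarith

theorem asym2p (p : ℕ) (hp : p.Prime) (hp2 : p ≠ 2) : ∀ x : ℝ, 0 ≤ x →
    |(sfC (2 * p) x : ℝ) - 2 / 3 * cc * (p / (p + 1)) * x| ≤ 16 * KK * √x := by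
  have hc := cc_pos
  have hK := cc_le_KK
  intro x hx
  have h := step (2 * 1) p hp ((Nat.coprime_primes hp Nat.prime_two).2 hp2) (2 / 3 * cc) (4 * KK)
    (by linarith) (by linarith) asym2 x hx
  rw [mul_one] at h
  refine h.trans (le_of_eq (by ring))

theorem asym2pq (p q : ℕ) (hp : p.Prime) (hp2 : p ≠ 2) (hq : q.Prime) (hq2 : q ≠ 2) (hpq : p ≠ q) :
    ∀ x : ℝ, 0 ≤ x →
    |(sfC (2 * (p * q)) x : ℝ) - 2 / 3 * cc * (p / (p + 1)) * (q / (q + 1)) * x|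
      ≤ 64 * KK * √x := by
  have hc := cc_pos
  have hK := cc_le_KK
  intro x hx
  have h1 : (p : ℝ) / (p + 1) ≤ 1 := by
    rw [div_le_one (by positivity)]; linarith
  have h2 : (0 : ℝ) ≤ p / (p + 1) := by positivity
  have h := step (2 * p) q hq (Nat.Coprime.mul_right ((Nat.coprime_primes hq Nat.prime_two).2 hq2)
    ((Nat.coprime_primes hq hp).2 hpq.symm)) (2 / 3 * cc * (p / (p + 1))) (16 * KK)
    (by positivity) (by nlinarith) (asym2p p hp hp2) x hx
  rw [mul_assoc 2 p q] at h
  refine h.trans (le_of_eq (by ring))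

def LL : ℝ := 1000 * KK

theorem sqrt_two_e (x e : ℝ) (hx : 0 ≤ x) (he : 0 < e) : √(x / e) ≤ 2 * √(x / (2 * e)) := by
  rw [Real.sqrt_le_left (by positivity), mul_pow, Real.sq_sqrt (by positivity)]
  have : 2 ^ 2 * (x / (2 * e)) = 2 * (x / e) := by field_simp
  rw [this]
  have : 0 ≤ x / e := by positivity
  linarith

theorem cnt1 (x : ℝ) (hx : 1 ≤ x) : |(aC 1 ⌊x⌋₊ : ℝ) - cc * x| ≤ LL * √x := by
  have h := disc_odd 1 squarefree_one (by norm_num) (2 / 3 * cc) (4 * KK) (by linarith [KK_pos])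
    asym2 x hx
  have hs := Real.sqrt_nonneg x
  have hK : 3 ≤ KK := by rw [KK]; linarith [cc_pos]
  simp only [Nat.cast_one, div_one] at h
  rw [LL]
  rw [show 3 / 2 * (2 / 3 * cc) * x = cc * x by ring] at h
  refine h.trans ?_
  gcongr
  linarith

theorem cnt_p (p : ℕ) (hp : p.Prime) (x : ℝ) (hx : 1 ≤ x) :
    |(aC p ⌊x⌋₊ : ℝ) - cc * (1 / ((p : ℝ) + 1)) * x| ≤ LL * √(x / p) := by
  have hK : 3 ≤ KK := by rw [KK]; linarith [cc_pos]
  have hp0 : (0 : ℝ) < p := by exact_mod_cast hp.pos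
  have hs := Real.sqrt_nonneg (x / p)
  by_cases hp2 : p = 2
  · subst hp2
    have h := disc_even 1 squarefree_one (by norm_num) (2 / 3 * cc) (4 * KK) (by linarith)
      asym2 x (by linarith)
    have h1 := sqrt_two_e x 1 (by linarith) one_pos
    rw [LL]
    simp only [Nat.cast_one, mul_one, Nat.cast_ofNat] at *
    rw [show 2 / 3 * cc / 2 * x = cc * (1 / (2 + 1)) * x by ring] at h
    refine h.trans ?_
    nlinarith
  · have h := disc_odd p hp.prime.squarefree ((Nat.coprime_primes hp Nat.prime_two).2 hp2) _
      (16 * KK) (by linarith) (asym2p p hp hp2) x hx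
    rw [show 3 / 2 * (2 / 3 * cc * ((p : ℝ) / (p + 1))) / p * x = cc * (1 / ((p : ℝ) + 1)) * x by
      field_simp] at h
    refine h.trans ?_
    rw [LL]
    gcongr
    linarith

theorem cnt_2q (q : ℕ) (hq : q.Prime) (hq2 : q ≠ 2) (x : ℝ) (hx : 1 ≤ x) :
    |(aC (2 * q) ⌊x⌋₊ : ℝ) - cc * (1 / ((2 : ℝ) + 1)) * (1 / ((q : ℝ) + 1)) * x|
      ≤ LL * √(x / (2 * q)) := by
  have hK : 3 ≤ KK := by rw [KK]; linarith [cc_pos]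
  have hq0 : (0 : ℝ) < q := by exact_mod_cast hq.pos
  have h := disc_even q hq.prime.squarefree ((Nat.coprime_primes hq Nat.prime_two).2 hq2) _
      (16 * KK) (by linarith) (asym2p q hq hq2) x (by linarith)
  have h1 := sqrt_two_e x q (by linarith) hq0
  rw [show 2 / 3 * cc * ((q : ℝ) / (q + 1)) / (2 * q) * x
    = cc * (1 / ((2 : ℝ) + 1)) * (1 / ((q : ℝ) + 1)) * x by field_simp; norm_num; ring] at h
  refine h.trans ?_
  rw [LL]
  have hs := Real.sqrt_nonneg (x / (2 * q))
  nlinarith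

theorem cnt_pq (p q : ℕ) (hp : p.Prime) (hq : q.Prime) (hpq : p ≠ q) (x : ℝ) (hx : 1 ≤ x) :
    |(aC (p * q) ⌊x⌋₊ : ℝ) - cc * (1 / ((p : ℝ) + 1)) * (1 / ((q : ℝ) + 1)) * x|
      ≤ LL * √(x / (p * q)) := by
  have hK : 3 ≤ KK := by rw [KK]; linarith [cc_pos]
  have hp0 : (0 : ℝ) < p := by exact_mod_cast hp.pos
  have hq0 : (0 : ℝ) < q := by exact_mod_cast hq.pos
  by_cases hp2 : p = 2
  · subst hp2
    exact_mod_cast cnt_2q q hq hpq.symm x hx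
  by_cases hq2 : q = 2
  · subst hq2
    have := cnt_2q p hp hpq x hx
    rw [mul_comm p 2, mul_comm (p : ℝ), mul_right_comm cc]
    exact_mod_cast this
  have hcop := (Nat.coprime_primes hp hq).2 hpq
  have h := disc_odd (p * q)
    (Nat.squarefree_mul_iff.2 ⟨hcop, hp.prime.squarefree, hq.prime.squarefree⟩)
    (Nat.Coprime.mul_left ((Nat.coprime_primes hp Nat.prime_two).2 hp2)
      ((Nat.coprime_primes hq Nat.prime_two).2 hq2)) _
      (64 * KK) (by linarith) (asym2pq p q hp hp2 hq hq2 hpq) x hx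
  push_cast at h
  rw [show 3 / 2 * (2 / 3 * cc * ((p : ℝ) / (p + 1)) * ((q : ℝ) / (q + 1))) / (p * q) * x
    = cc * (1 / ((p : ℝ) + 1)) * (1 / ((q : ℝ) + 1)) * x by field_simp] at h
  refine h.trans ?_
  rw [LL]
  gcongr
  linarith

theorem var_abs (P : Finset ℕ) (F : Finset ℤ) (I : ℕ → ℤ → ℝ) (f s : ℕ → ℝ) (M : ℝ) (hM : 0 ≤ M)
    (hI : ∀ p D, I p D * I p D = I p D)
    (hf0 : ∀ p ∈ P, 0 ≤ f p) (hfs : ∀ p ∈ P, f p ≤ s p) (hf1 : ∀ p ∈ P, f p ≤ 1)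
    (h1 : ∀ p ∈ P, |∑ D ∈ F, I p D - f p * F.card| ≤ M * s p)
    (h2 : ∀ p ∈ P, ∀ q ∈ P, p ≠ q →
      |∑ D ∈ F, I p D * I q D - f p * f q * F.card| ≤ M * (s p * s q)) :
    |∑ D ∈ F, (∑ p ∈ P, I p D - ∑ p ∈ P, f p) ^ 2 - (F.card : ℝ) * ∑ p ∈ P, f p * (1 - f p)|
      ≤ 3 * M * (∑ p ∈ P, s p) ^ 2 + M * ∑ p ∈ P, s p := by
  have e1 : ∑ D ∈ F, (∑ p ∈ P, I p D - ∑ p ∈ P, f p) ^ 2 =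
      ∑ p ∈ P, ∑ q ∈ P, ∑ D ∈ F, (I p D - f p) * (I q D - f q) := by
    rw [Finset.sum_comm' (t' := P) (s' := fun _ => P) (by simp)]
    have : ∀ D ∈ F, (∑ p ∈ P, I p D - ∑ p ∈ P, f p) ^ 2 =
        ∑ p ∈ P, ∑ q ∈ P, (I q D - f q) * (I p D - f p) := by
      intro D _
      rw [← Finset.sum_sub_distrib, pow_two, Finset.sum_mul_sum, Finset.sum_comm]
    rw [Finset.sum_congr rfl this, Finset.sum_comm]
    refine Finset.sum_congr rfl fun p _ => ?_
    rw [Finset.sum_comm]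
  have e2 : (F.card : ℝ) * ∑ p ∈ P, f p * (1 - f p) =
      ∑ p ∈ P, ∑ q ∈ P, if p = q then (F.card : ℝ) * (f p * (1 - f p)) else 0 := by
    rw [Finset.mul_sum]
    refine Finset.sum_congr rfl fun p hp => ?_
    rw [Finset.sum_ite_eq, if_pos hp]
  have e3 : 3 * M * (∑ p ∈ P, s p) ^ 2 + M * ∑ p ∈ P, s p =
      ∑ p ∈ P, ∑ q ∈ P, (3 * M * (s p * s q) + if p = q then M * s p else 0) := by
    simp only [Finset.sum_add_distrib]
    congr 1
    · rw [pow_two, Finset.sum_mul_sum, Finset.mul_sum]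
      refine Finset.sum_congr rfl fun p _ => ?_
      rw [Finset.mul_sum]
    · rw [Finset.mul_sum]
      refine Finset.sum_congr rfl fun p hp => ?_
      rw [Finset.sum_ite_eq, if_pos hp]
  rw [e1, e2, e3, ← Finset.sum_sub_distrib]
  refine (Finset.abs_sum_le_sum_abs _ _).trans (Finset.sum_le_sum fun p hp => ?_)
  rw [← Finset.sum_sub_distrib]
  refine (Finset.abs_sum_le_sum_abs _ _).trans (Finset.sum_le_sum fun q hq => ?_)
  have e4 : ∑ D ∈ F, (I p D - f p) * (I q D - f q) =
      ∑ D ∈ F, I p D * I q D - f q * ∑ D ∈ F, I p D - f p * ∑ D ∈ F, I q D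
        + f p * f q * F.card := by
    rw [Finset.mul_sum, Finset.mul_sum, ← Finset.sum_sub_distrib, ← Finset.sum_sub_distrib,
      mul_comm (f p * f q) (F.card : ℝ), ← nsmul_eq_mul, ← Finset.sum_const,
      ← Finset.sum_add_distrib]
    refine Finset.sum_congr rfl fun D _ => ?_
    ring
  have a1 := h1 p hp
  have a2 := h1 q hq
  have b1 := hf0 p hp
  have b2 := hf0 q hq
  have c1 := hfs p hp
  have c2 := hfs q hq
  rw [e4]
  by_cases hpq : p = q
  · subst hpq
    simp only [hI, if_true]
    set A := ∑ D ∈ F, I p D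
    have : A - f p * A - f p * A + f p * f p * F.card - F.card * (f p * (1 - f p)) =
      (A - f p * F.card) * (1 - 2 * f p) := by ring
    rw [this, abs_mul]
    have g1 : |1 - 2 * f p| ≤ 1 := by
      rw [abs_le]
      have := hf1 p hp
      constructor <;> linarith
    have g2 : |A - f p * F.card| * |1 - 2 * f p| ≤ M * s p * 1 :=
      mul_le_mul a1 g1 (abs_nonneg _) (by nlinarith)
    have g3 : 0 ≤ 3 * M * (s p * s p) := by nlinarith [mul_self_nonneg (s p)]
    linarith
  · simp only [hpq, if_false]
    have a3 := h2 p hp q hq hpq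
    set A := ∑ D ∈ F, I p D
    set B := ∑ D ∈ F, I q D
    set C := ∑ D ∈ F, I p D * I q D
    have : C - f q * A - f p * B + f p * f q * F.card - 0 =
      (C - f p * f q * F.card) - f q * (A - f p * F.card) - f p * (B - f q * F.card) := by ring
    rw [this]
    have d1 : |f q * (A - f p * F.card)| ≤ M * (s p * s q) := by
      rw [abs_mul, abs_of_nonneg b2]
      calc f q * |A - f p * F.card| ≤ s q * (M * s p) :=
            mul_le_mul c2 a1 (abs_nonneg _) (b2.trans c2)
        _ = _ := by ring
    have d2 : |f p * (B - f q * F.card)| ≤ M * (s p * s q) := by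
      rw [abs_mul, abs_of_nonneg b1]
      calc f p * |B - f q * F.card| ≤ s p * (M * s q) :=
            mul_le_mul c1 a2 (abs_nonneg _) (b1.trans c1)
        _ = _ := by ring
    rw [abs_le] at *
    constructor <;> linarith

def pF (Y : ℝ) : Finset ℕ := (Finset.Icc 1 ⌊Y⌋₊).filter Nat.Prime

theorem mem_pF (Y : ℝ) (hY : 0 ≤ Y) (p : ℕ) : p ∈ pF Y ↔ p.Prime ∧ (p : ℝ) ≤ Y := by
  simp only [pF, Finset.mem_filter, Finset.mem_Icc, Nat.le_floor_iff hY]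
  constructor
  · rintro ⟨⟨_, h⟩, h2⟩; exact ⟨h2, h⟩
  · rintro ⟨h, h2⟩; exact ⟨⟨h.one_le, h2⟩, h⟩

theorem primeSum_eq (Y : ℝ) (hY : 0 ≤ Y) (f : ℕ → ℝ) : primeSum Y f = ∑ p ∈ pF Y, f p := by
  have e : {p : ℕ | p.Prime ∧ (p : ℝ) ≤ Y} = ((pF Y : Finset ℕ) : Set ℕ) := by
    ext p
    simp [mem_pF Y hY]
  rw [primeSum, e, finsum_mem_coe_finset]

theorem omegaY_eq (Y : ℝ) (hY : 0 ≤ Y) (D : ℤ) :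
    (omegaY Y D : ℝ) = ∑ p ∈ pF Y, if (p : ℤ) ∣ D then (1 : ℝ) else 0 := by
  rw [omegaY, Nat.subtype_card ((pF Y).filter (fun p : ℕ => (p : ℤ) ∣ D))]
  · simp
  · intro p
    rw [Finset.mem_filter, mem_pF Y hY, and_assoc]

theorem mem_fdF (X : ℝ) (hX : 0 ≤ X) (D : ℤ) :
    D ∈ fdF ⌊X⌋₊ ↔ IsFundDiscr D ∧ |(D : ℝ)| ≤ X := by
  classical
  rw [fdF, Finset.mem_filter, Finset.mem_Icc, and_comm]
  have : |(D : ℝ)| = (D.natAbs : ℝ) := by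
    rw [← Int.cast_abs, Int.abs_eq_natAbs]; simp
  rw [this, ← Nat.le_floor_iff hX]
  refine and_congr_right fun _ => ?_
  omega

theorem fdCount_eq (X : ℝ) (hX : 0 ≤ X) : fdCount (fun _ => True) X = (fdF ⌊X⌋₊).card := by
  rw [fdCount]
  apply Nat.subtype_card
  intro D
  rw [mem_fdF X hX]; simp

theorem aC_one (N : ℕ) : aC 1 N = (fdF N).card := by simp [aC]

theorem one_le_card (X : ℝ) (hX : 3 ≤ X) : 1 ≤ (fdF ⌊X⌋₊).card := by
  rw [Nat.one_le_iff_ne_zero, Finset.card_ne_zero]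
  refine ⟨-3, ?_⟩
  rw [mem_fdF X (by linarith)]
  refine ⟨⟨by norm_num, Or.inl ⟨?_, by norm_num⟩⟩, ?_⟩
  · rw [← Int.squarefree_natAbs]
    exact Nat.prime_three.prime.squarefree
  · push_cast
    rw [abs_neg, abs_of_pos (by norm_num)]
    exact hX

theorem sum_sqrt (n : ℕ) : ∑ p ∈ Finset.Icc 1 n, √(1 / (p : ℝ)) ≤ 2 * √n := by
  induction n with
  | zero => simp
  | succ n ih =>
    rw [Finset.sum_Icc_succ_top (by omega)]
    push_cast
    have h1 : (0 : ℝ) < √((n : ℝ) + 1) := by positivity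
    have h2 := Real.sq_sqrt (show (0 : ℝ) ≤ n by positivity)
    have h3 := Real.sq_sqrt (show (0 : ℝ) ≤ (n : ℝ) + 1 by positivity)
    have h4 := Real.sqrt_nonneg (n : ℝ)
    have : √(1 / ((n : ℝ) + 1)) ≤ 2 * √((n : ℝ) + 1) - 2 * √n := by
      rw [Real.sqrt_div (by norm_num), Real.sqrt_one, div_le_iff₀ h1]
      nlinarith [sq_nonneg (√((n : ℝ) + 1) - √n)]
    linarith

theorem sum_pF (Y : ℝ) (hY : 0 ≤ Y) : ∑ p ∈ pF Y, √(1 / (p : ℝ)) ≤ 2 * √Y := by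
  refine (Finset.sum_le_sum_of_subset_of_nonneg (Finset.filter_subset _ _) ?_).trans
    ((sum_sqrt ⌊Y⌋₊).trans ?_)
  · intros; positivity
  · gcongr
    exact Nat.floor_le hY

theorem f_le_s (p : ℕ) (hp : 1 ≤ p) : 1 / ((p : ℝ) + 1) ≤ √(1 / (p : ℝ)) := by
  have hp' : (1 : ℝ) ≤ p := by exact_mod_cast hp
  apply Real.le_sqrt_of_sq_le
  rw [div_pow, one_pow]
  apply one_div_le_one_div_of_le <;> nlinarith

theorem main_num (X Y : ℝ) (hX : 3 ≤ X) (hY : 3 ≤ Y) :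
    |∑ D ∈ fdF ⌊X⌋₊, ((omegaY Y D : ℝ) - ∑ p ∈ pF Y, 1 / ((p : ℝ) + 1)) ^ 2
      - ((fdF ⌊X⌋₊).card : ℝ) * ∑ p ∈ pF Y, 1 / ((p : ℝ) + 1) * (1 - 1 / ((p : ℝ) + 1))|
      ≤ 28 * LL * √X * Y := by
  have hX0 : 0 ≤ X := by linarith
  have hL : 0 ≤ LL := by rw [LL]; linarith [KK_pos]
  have hN := cnt1 X (by linarith)
  rw [aC_one] at hN
  have hM : 0 ≤ 2 * LL * √X := by positivity
  have h := var_abs (pF Y) (fdF ⌊X⌋₊) (fun p D => if (p : ℤ) ∣ D then (1 : ℝ) else 0)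
    (fun p => 1 / ((p : ℝ) + 1)) (fun p => √(1 / (p : ℝ))) (2 * LL * √X) hM
    (by intro p D; simp) (by intro p _; positivity) ?_ ?_ ?_ ?_
  · simp only [omegaY_eq Y (show 0 ≤ Y by linarith)]
    refine h.trans ?_
    have hT := sum_pF Y (by linarith)
    have hT0 : 0 ≤ ∑ p ∈ pF Y, √(1 / (p : ℝ)) := Finset.sum_nonneg fun _ _ => Real.sqrt_nonneg _
    have hY2 : √Y ≤ Y := by
      rw [Real.sqrt_le_left (by linarith)]; nlinarith
    have hT2 : (∑ p ∈ pF Y, √(1 / (p : ℝ))) ^ 2 ≤ 4 * Y := by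
      calc _ ≤ (2 * √Y) ^ 2 := by gcongr
        _ = 4 * Y := by rw [mul_pow, Real.sq_sqrt (by linarith)]; norm_num
    have hT3 : ∑ p ∈ pF Y, √(1 / (p : ℝ)) ≤ 2 * Y := by linarith
    have := mul_le_mul_of_nonneg_left hT2 hM
    have := mul_le_mul_of_nonneg_left hT3 hM
    linarith
  · intro p hp
    exact f_le_s p ((mem_pF Y (by linarith) p).1 hp).1.one_le
  · intro p hp
    rw [div_le_one (by positivity)]
    have : (0 : ℝ) ≤ p := by positivity
    linarith
  · intro p hp
    have hpp := ((mem_pF Y (by linarith) p).1 hp).1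
    have e : ∑ D ∈ fdF ⌊X⌋₊, (if (p : ℤ) ∣ D then (1 : ℝ) else 0) = aC p ⌊X⌋₊ := by
      rw [aC]; simp
    rw [e]
    have h1 := cnt_p p hpp X (by linarith)
    have h2 := f_le_s p hpp.one_le
    rw [show X / p = X * (1 / (p : ℝ)) by ring, Real.sqrt_mul hX0] at h1
    have h3 : |1 / ((p : ℝ) + 1) * ((fdF ⌊X⌋₊).card - cc * X)| ≤ √(1 / (p : ℝ)) * (LL * √X) := by
      rw [abs_mul, abs_of_nonneg (by positivity)]
      exact mul_le_mul h2 hN (abs_nonneg _) (by positivity)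
    rw [abs_le] at h1 h3 ⊢
    constructor <;> linarith
  · intro p hp q hq hpq
    have hpp := ((mem_pF Y (by linarith) p).1 hp).1
    have hqq := ((mem_pF Y (by linarith) q).1 hq).1
    have e : ∑ D ∈ fdF ⌊X⌋₊, (if (p : ℤ) ∣ D then (1 : ℝ) else 0) *
        (if (q : ℤ) ∣ D then (1 : ℝ) else 0) = aC (p * q) ⌊X⌋₊ := by
      rw [aC, Finset.card_filter]
      push_cast
      refine Finset.sum_congr rfl fun D _ => ?_
      have hc : IsCoprime (p : ℤ) (q : ℤ) :=
        Nat.isCoprime_iff_coprime.2 ((Nat.coprime_primes hpp hqq).2 hpq)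
      have : (p : ℤ) * q ∣ D ↔ (p : ℤ) ∣ D ∧ (q : ℤ) ∣ D :=
        ⟨fun h => ⟨(dvd_mul_right _ _).trans h, (dvd_mul_left _ _).trans h⟩,
          fun h => hc.mul_dvd h.1 h.2⟩
      rw [ite_zero_mul_ite_zero, mul_one]
      simp only [this]
    rw [e]
    have h1 := cnt_pq p q hpp hqq hpq X (by linarith)
    have h2 := f_le_s p hpp.one_le
    have h2' := f_le_s q hqq.one_le
    rw [show X / (p * q) = X * (1 / (p : ℝ) * (1 / (q : ℝ))) by ring, Real.sqrt_mul hX0,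
      Real.sqrt_mul (by positivity)] at h1
    have h3 : |1 / ((p : ℝ) + 1) * (1 / ((q : ℝ) + 1)) * ((fdF ⌊X⌋₊).card - cc * X)|
        ≤ √(1 / (p : ℝ)) * √(1 / (q : ℝ)) * (LL * √X) := by
      rw [abs_mul, abs_of_nonneg (by positivity)]
      exact mul_le_mul (mul_le_mul h2 h2' (by positivity) (by positivity)) hN (abs_nonneg _)
        (by positivity)
    rw [abs_le] at h1 h3 ⊢
    constructor <;> linarith

def kap : ℝ := (cc / 2) / (1 + LL ^ 2 / (2 * cc))

theorem card_lower (X : ℝ) (hX : 3 ≤ X) : kap * X ≤ (fdF ⌊X⌋₊).card := by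
  have hc := cc_pos
  have hN := cnt1 X (by linarith)
  rw [aC_one] at hN
  have h1 : (1 : ℝ) ≤ (fdF ⌊X⌋₊).card := by exact_mod_cast one_le_card X hX
  have h2 := Real.sq_sqrt (show 0 ≤ X by linarith)
  have h3 : LL * √X ≤ cc / 2 * X + LL ^ 2 / (2 * cc) := by
    have e : cc / 2 * X + LL ^ 2 / (2 * cc) - LL * √X = (cc * √X - LL) ^ 2 / (2 * cc) := by
      rw [← h2]
      simp only [Real.sqrt_sq (Real.sqrt_nonneg X)]
      field_simp
      ring
    have : 0 ≤ (cc * √X - LL) ^ 2 / (2 * cc) := by positivity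
    linarith
  have h4 : 0 ≤ LL ^ 2 / (2 * cc) := by positivity
  rw [kap, div_mul_eq_mul_div, div_le_iff₀ (by positivity)]
  rw [abs_le] at hN
  nlinarith [hN.1]

/-- Variance of `ω_Y` over fundamental discriminants: with `μ = ∑_{p ≤ Y} 1/(p+1)`, for all
`ε, δ > 0` there is `C > 0` such that for `X ≥ 3` and `3 ≤ Y ≤ X^{1/2-δ}`,
`|(1/N(X)) ∑_{|D| ≤ X} (ω_Y(D) - μ)² - ∑_{p ≤ Y} (1/(p+1))(1 - 1/(p+1))| ≤ C Y X^{-1/2+ε}`. -/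
theorem statement_10 (ε δ : ℝ) (hε : 0 < ε) (hδ : 0 < δ) :
    ∃ C : ℝ, 0 < C ∧
      ∀ X : ℝ, 3 ≤ X → ∀ Y : ℝ, 3 ≤ Y → Y ≤ X ^ ((1 : ℝ) / 2 - δ) →
        |(1 / (fdCount (fun _ => True) X : ℝ)) *
            (∑ᶠ D ∈ {D : ℤ | IsFundDiscr D ∧ |(D : ℝ)| ≤ X},
              ((omegaY Y D : ℝ) - primeSum Y (fun p => 1 / ((p : ℝ) + 1))) ^ 2) -
          primeSum Y (fun p => (1 / ((p : ℝ) + 1)) * (1 - 1 / ((p : ℝ) + 1)))| ≤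
          C * Y * X ^ (-(1 : ℝ) / 2 + ε) := by
  have hc := cc_pos
  have hk : 0 < kap := by rw [kap]; positivity
  have hL : 0 < LL := by rw [LL]; linarith [KK_pos]
  refine ⟨28 * LL / kap, by positivity, ?_⟩
  intro X hX Y hY _
  have hX0 : 0 < X := by linarith
  have hY0 : 0 ≤ Y := by linarith
  have e : {D : ℤ | IsFundDiscr D ∧ |(D : ℝ)| ≤ X} = ((fdF ⌊X⌋₊ : Finset ℤ) : Set ℤ) := by
    ext D
    simp [mem_fdF X hX0.le]
  rw [primeSum_eq Y hY0, primeSum_eq Y hY0, fdCount_eq X hX0.le, e, finsum_mem_coe_finset]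
  have h1 := main_num X Y hX hY
  have h2 := card_lower X hX
  have hN : (0 : ℝ) < (fdF ⌊X⌋₊).card := lt_of_lt_of_le (by positivity) h2
  set N : ℝ := ((fdF ⌊X⌋₊).card : ℝ)
  set S := ∑ D ∈ fdF ⌊X⌋₊, ((omegaY Y D : ℝ) - ∑ p ∈ pF Y, 1 / ((p : ℝ) + 1)) ^ 2
  set V := ∑ p ∈ pF Y, 1 / ((p : ℝ) + 1) * (1 - 1 / ((p : ℝ) + 1))
  have e2 : 1 / N * S - V = (S - N * V) / N := by field_simp
  rw [e2, abs_div, abs_of_pos hN]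
  have h3 : (√X)⁻¹ ≤ X ^ (-(1 : ℝ) / 2 + ε) := by
    rw [Real.sqrt_eq_rpow, ← Real.rpow_neg hX0.le]
    apply Real.rpow_le_rpow_of_exponent_le (by linarith)
    linarith
  have hs : 0 < √X := Real.sqrt_pos.2 hX0
  calc |S - N * V| / N ≤ (28 * LL * √X * Y) / (kap * X) := by gcongr
    _ = 28 * LL / kap * Y * (√X)⁻¹ := by
      have h4 := Real.mul_self_sqrt hX0.le
      rw [div_eq_iff (by positivity)]
      nth_rw 3 [← h4]
      field_simp
    _ ≤ 28 * LL / kap * Y * X ^ (-(1 : ℝ) / 2 + ε) := by gcongr
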